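/- Let f : {0,1}^n → ℝ_+ be a nonnegative submodular function and K ⊆ ℝ^q a convex cone containing the origin, with A ∈ ℝ^{q×m} and B ∈ ℝ^q. Then conv(S(f,K)) = {(x,z) ∈ ℝ^m × [0,1]^n : ∃ y ∈ ℝ such that y − f(∅) ≥ π^⊤ z for all π ∈ P_{f̃} and Ax + By ∈ K}, where f̃ := f − f(∅) and P_{f̃} := {π ∈ ℝ^n : Σ_{i∈V} π_i ≤ f(V) − f(∅) for all V ⊆ [n]}. That is, conv(S(f,K)) is given by the extended polymatroid inequalities for f − f(∅), the bounds 0 ≤ z ≤ 1, and the homogeneous conic constraint Ax + By ∈ K. -/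

import Mathlib

/-- Greedy algorithm, one element at a time in decreasing order of `z`. -/
theorem greedy_aux {n : ℕ} (f : Finset (Fin n) → ℝ)
    (hsub : ∀ S₁ S₂ : Finset (Fin n), f (S₁ ∪ S₂) + f (S₁ ∩ S₂) ≤ f S₁ + f S₂)
    (z : Fin n → ℝ) (hz : ∀ i, z i ∈ Set.Icc (0:ℝ) 1) (s : Finset (Fin n)) :
    ∃ (p : Fin n → ℝ) (l : Finset (Fin n) → ℝ),
      (∀ S, S ⊆ s → ∑ i ∈ S, p i ≤ f S - f ∅) ∧
      (∀ V, 0 ≤ l V) ∧ (∑ V, l V = 1) ∧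
      (∀ i, ∑ V, l V * (if i ∈ V then (1:ℝ) else 0) = if i ∈ s then z i else 0) ∧
      (∑ V, l V * f V = f ∅ + ∑ i ∈ s, p i * z i) ∧
      (∀ c, c ≤ 1 → (∀ i ∈ s, c ≤ z i) → c ≤ l s) := by
  classical
  induction s using Finset.induction_on_min_value z with
  | empty =>
    refine ⟨0, fun V => if V = ∅ then 1 else 0, ?_, ?_, ?_, ?_, ?_, ?_⟩
    · intro S hS
      rw [Finset.subset_empty.mp hS]; simp
    · intro V; dsimp only; split_ifs <;> norm_num
    · simp
    · intro i; simp [-mul_ite, ite_mul]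
    · simp
    · intro c hc _; simpa using hc
  | insert a s ha hmin ih =>
    obtain ⟨p, l, h1, h2, h3, h4, h5, h6⟩ := ih
    have hne : insert a s ≠ s := fun h => ha (h ▸ Finset.mem_insert_self a s)
    have key : ∀ g : Finset (Fin n) → ℝ,
        ∑ V, (l V + ((if V = insert a s then z a else 0) - (if V = s then z a else 0))) * g V
          = ∑ V, l V * g V + z a * (g (insert a s) - g s) := by
      intro g
      simp only [add_mul, sub_mul, Finset.sum_add_distrib, Finset.sum_sub_distrib, ite_mul,
        zero_mul, Finset.sum_ite_eq', Finset.mem_univ, if_true]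
      ring
    have hp : ∀ S : Finset (Fin n), a ∉ S → ∀ c : ℝ, ∀ g : Fin n → ℝ,
        ∑ i ∈ S, Function.update p a c i * g i = ∑ i ∈ S, p i * g i := by
      intro S hS c g
      refine Finset.sum_congr rfl fun i hi => ?_
      have hia : i ≠ a := fun h => hS (h ▸ hi)
      rw [Function.update_of_ne hia]
    refine ⟨Function.update p a (f (insert a s) - f s),
      fun V => l V + ((if V = insert a s then z a else 0) - (if V = s then z a else 0)),
      ?_, ?_, ?_, ?_, ?_, ?_⟩
    · intro S hS
      by_cases haS : a ∈ S
      · have hE : S.erase a ⊆ s := by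
          intro i hi
          rw [Finset.mem_erase] at hi
          exact (Finset.mem_insert.mp (hS hi.2)).resolve_left hi.1
        have e1 : S ∪ s = insert a s := by
          ext i
          simp only [Finset.mem_union, Finset.mem_insert]
          constructor
          · rintro (h | h)
            · exact Finset.mem_insert.mp (hS h)
            · exact Or.inr h
          · rintro (h | h)
            · exact Or.inl (h ▸ haS)
            · exact Or.inr h
        have e2 : S ∩ s = S.erase a := by
          ext i
          simp only [Finset.mem_inter, Finset.mem_erase]
          constructor
          · rintro ⟨h, h'⟩
            exact ⟨fun e => ha (e ▸ h'), h⟩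
          · rintro ⟨h, h'⟩
            exact ⟨h', hE (Finset.mem_erase.mpr ⟨h, h'⟩)⟩
        have := hsub S s
        rw [e1, e2] at this
        have h := h1 _ hE
        have h' := hp (S.erase a) (Finset.notMem_erase a S) (f (insert a s) - f s) 1
        simp only [Pi.one_apply, mul_one] at h'
        rw [← Finset.add_sum_erase S _ haS, h', Function.update_self]
        linarith
      · have h' := hp S haS (f (insert a s) - f s) 1
        simp only [Pi.one_apply, mul_one] at h'
        rw [h']
        exact h1 S ((Finset.subset_insert_iff_of_notMem haS).mp hS)
    · intro V
      have hV := h2 V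
      have hza := (hz a).1
      dsimp only
      by_cases e : V = s
      · subst e
        have := h6 (z a) (hz a).2 hmin
        rw [if_neg (Ne.symm hne), if_pos rfl]
        linarith
      · rw [if_neg e]
        split_ifs <;> linarith
    · have := key 1
      simp only [Pi.one_apply, mul_one] at this
      rw [this, h3]; ring
    · intro i
      have := key (fun V => if i ∈ V then (1:ℝ) else 0)
      dsimp only at this ⊢
      rw [this, h4]
      by_cases e : i = a
      · subst e; simp [ha]
      · simp [e]
    · rw [key f, h5, Finset.sum_insert ha, hp s ha, Function.update_self]
      ring
    · intro c _ hc
      have := hc a (Finset.mem_insert_self a s)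
      have hV := h2 (insert a s)
      dsimp only
      rw [if_pos rfl, if_neg hne]
      linarith

/-- Corollary 3: for a nonnegative submodular `f : {0,1}^n → ℝ_+` and a convex cone `K`
containing the origin, `conv(S(f,K))` is given by the extended polymatroid inequalities
for `f − f(∅)`, the bounds `0 ≤ z ≤ 1`, and the conic constraint `Ax + By ∈ K`.
Binary vectors `z` are identified with characteristic vectors of subsets `V ⊆ [n]`. -/
theorem conv_S_submodular (n m q : ℕ) (f : Finset (Fin n) → ℝ)
    (hf : ∀ V : Finset (Fin n), 0 ≤ f V)
    (hsub : ∀ S₁ S₂ : Finset (Fin n), f (S₁ ∪ S₂) + f (S₁ ∩ S₂) ≤ f S₁ + f S₂)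
    (K : Set (Fin q → ℝ)) (hK0 : (0 : Fin q → ℝ) ∈ K)
    (hKadd : ∀ a ∈ K, ∀ b ∈ K, a + b ∈ K)
    (hKsmul : ∀ c : ℝ, 0 ≤ c → ∀ a ∈ K, c • a ∈ K)
    (A : Matrix (Fin q) (Fin m) ℝ) (B : Fin q → ℝ) :
    convexHull ℝ {w : (Fin m → ℝ) × (Fin n → ℝ) |
      ∃ V : Finset (Fin n), (∀ i, w.2 i = if i ∈ V then (1:ℝ) else 0) ∧
        ∃ y : ℝ, f V ≤ y ∧ A.mulVec w.1 + y • B ∈ K}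
    = {w : (Fin m → ℝ) × (Fin n → ℝ) | (∀ i, w.2 i ∈ Set.Icc (0:ℝ) 1) ∧
        ∃ y : ℝ,
          (∀ π : Fin n → ℝ, (∀ V : Finset (Fin n), ∑ i ∈ V, π i ≤ f V - f ∅) →
            ∑ i, π i * w.2 i ≤ y - f ∅) ∧
          A.mulVec w.1 + y • B ∈ K} := by
  classical
  apply Set.Subset.antisymm
  · apply convexHull_min
    · rintro ⟨x, z⟩ ⟨V, hV, y, hy, hAK⟩
      dsimp only at hV hAK
      refine ⟨fun i => ?_, y, fun p hp => ?_, hAK⟩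
      · dsimp only
        rw [hV i]; split_ifs <;> simp
      · have := hp V
        have e : ∑ i, p i * z i = ∑ i ∈ V, p i := by
          simp [hV]
        dsimp only
        rw [e]; linarith
    · rintro ⟨x, z⟩ ⟨hz, y, hy, hK⟩ ⟨x', z'⟩ ⟨hz', y', hy', hK'⟩ a b ha hb hab
      dsimp only at hz hy hK hz' hy' hK'
      refine ⟨fun i => ?_, a * y + b * y', fun p hp => ?_, ?_⟩
      · exact convex_Icc (0:ℝ) 1 (hz i) (hz' i) ha hb hab
      · have h1 := mul_le_mul_of_nonneg_left (hy p hp) ha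
        have h2 := mul_le_mul_of_nonneg_left (hy' p hp) hb
        have e : ∑ i, p i * (a * z i + b * z' i)
            = a * ∑ i, p i * z i + b * ∑ i, p i * z' i := by
          rw [Finset.mul_sum, Finset.mul_sum, ← Finset.sum_add_distrib]
          exact Finset.sum_congr rfl fun i _ => by ring
        have e2 : a * y + b * y' - f ∅ = a * (y - f ∅) + b * (y' - f ∅) := by
          linear_combination (f ∅) * hab
        change ∑ i, p i * (a * z i + b * z' i) ≤ _
        rw [e, e2]; linarith
      · have := hKadd _ (hKsmul a ha _ hK) _ (hKsmul b hb _ hK')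
        change A.mulVec (a • x + b • x') + (a * y + b * y') • B ∈ K
        convert this using 1
        rw [Matrix.mulVec_add, Matrix.mulVec_smul, Matrix.mulVec_smul]
        module
  · rintro ⟨x, z⟩ ⟨hz, y, hy, hK⟩
    dsimp only at hz hy hK
    obtain ⟨p, l, h1, h2, h3, h4, h5, -⟩ := greedy_aux f hsub z hz Finset.univ
    have hL : ∑ V, l V * f V ≤ y := by
      have := hy p (fun V => h1 V (Finset.subset_univ V))
      rw [h5]; linarith
    have hL0 : 0 ≤ ∑ V, l V * f V := Finset.sum_nonneg fun V _ => mul_nonneg (h2 V) (hf V)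
    obtain ⟨t, ht0, ht1, htf⟩ : ∃ t : Finset (Fin n) → ℝ, (∀ V, 0 ≤ t V) ∧
        (∑ V, l V * t V = 1) ∧ ∀ V, l V ≠ 0 → f V ≤ t V * y := by
      rcases (hL0.trans hL).eq_or_lt with hy0 | hy0
      · refine ⟨fun _ => 1, fun _ => zero_le_one, by simpa using h3, fun V hV => ?_⟩
        have h0 : ∑ V, l V * f V = 0 := by linarith
        have := (Finset.sum_eq_zero_iff_of_nonneg
          (fun V _ => mul_nonneg (h2 V) (hf V))).mp h0 V (Finset.mem_univ V)
        have := (mul_eq_zero.mp this).resolve_left hV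
        rw [this, ← hy0]; simp
      · refine ⟨fun V => f V / y + (1 - (∑ V, l V * f V) / y), fun V => ?_, ?_, fun V _ => ?_⟩
        · have := div_nonneg (hf V) hy0.le
          have := (div_le_one hy0).mpr hL
          dsimp only
          linarith
        · simp only [mul_add, Finset.sum_add_distrib, ← Finset.sum_mul, h3, ← mul_div_assoc,
            ← Finset.sum_div]
          ring
        · dsimp only
          have : (f V / y + (1 - (∑ V, l V * f V) / y)) * y = f V + (y - ∑ V, l V * f V) := by
            field_simp
          rw [this]; linarith
    have hw : ((x, z) : (Fin m → ℝ) × (Fin n → ℝ)) = ∑ V with l V ≠ 0,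
        l V • ((t V • x, fun i => if i ∈ V then (1:ℝ) else 0) :
          (Fin m → ℝ) × (Fin n → ℝ)) := by
      rw [Finset.sum_filter_of_ne (p := fun V => l V ≠ 0)
        (fun V _ h h0 => h (by rw [h0, zero_smul]))]
      refine Prod.ext ?_ ?_
      · rw [Prod.fst_sum]
        simp only [Prod.smul_fst, smul_smul]
        rw [← Finset.sum_smul, ht1, one_smul]
      · rw [Prod.snd_sum]
        funext i
        have := h4 i
        simp only [Finset.mem_univ, if_true] at this
        simp only [Prod.smul_snd, Finset.sum_apply, Pi.smul_apply, smul_eq_mul]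
        exact this.symm
    rw [hw]
    refine (convex_convexHull ℝ _).sum_mem (fun V _ => h2 V) ?_ fun V hV => ?_
    · rw [Finset.sum_filter_ne_zero, h3]
    · apply subset_convexHull
      refine ⟨V, fun i => rfl, t V * y, htf V (Finset.mem_filter.mp hV).2, ?_⟩
      have := hKsmul (t V) (ht0 V) _ hK
      dsimp only
      convert this using 1
      rw [Matrix.mulVec_smul]
      module
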